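/- Let n ≥ 2 be an integer and q a single polynomial indeterminate. Let M be the n!×n! matrix over ℤ[q], indexed by permutations σ, τ of {1,…,n}, whose (σ,τ) entry is q^{ι(σ,τ)}, where ι(σ,τ) = #{(i,j) : 1 ≤ i < j ≤ n and τ⁻¹(σ(i)) > τ⁻¹(σ(j))}. Let D = ∏_{i=1}^{n−1} (1 − q^{i²+i})^{n−i} ∈ ℤ[q]. Then there exists a matrix N with entries in ℤ[q] such that M·N = D·(identity matrix) and N·M = D·(identity matrix). (Equivalently, every entry of M⁻¹, computed over the field of rational functions, can be written with denominator dividing ∏_{i=1}^{n−1} (1 − q^{i²+i})^{n−i}.) -/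

import Mathlib

open Finset Equiv

section LeftInverse

variable {K R : Type*} [CommRing K] [Ring R] [Algebra K R]

/-- `x` has a left inverse with denominator `d`. -/
def HasLeftInverseUpTo (d : K) (x : R) : Prop :=
  ∃ y : R, y * x = d • 1

theorem hasLeftInverseUpTo_one : HasLeftInverseUpTo (1 : K) (1 : R) :=
  ⟨1, by simp⟩

theorem HasLeftInverseUpTo.mul {d e : K} {x y : R}
    (hx : HasLeftInverseUpTo d x) (hy : HasLeftInverseUpTo e y) :
    HasLeftInverseUpTo (d * e) (x * y) := by
  obtain ⟨a, ha⟩ := hx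
  obtain ⟨b, hb⟩ := hy
  refine ⟨b * a, ?_⟩
  rw [mul_assoc, ← mul_assoc a, ha, smul_mul_assoc, one_mul, mul_smul_comm, hb, smul_smul]

theorem HasLeftInverseUpTo.of_mul_left {d : K} {a x : R}
    (h : HasLeftInverseUpTo d (a * x)) : HasLeftInverseUpTo d x := by
  obtain ⟨y, hy⟩ := h
  exact ⟨y * a, by rw [mul_assoc, hy]⟩

theorem hasLeftInverseUpTo_one_sub_smul {l : ℕ} {t : R} (ht : t ^ l = 1) (c : K) :
    HasLeftInverseUpTo (1 - c ^ l) (1 - c • t) :=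
  ⟨∑ i ∈ range l, (c • t) ^ i, by
    rw [geom_sum_mul_neg, smul_pow, ht, sub_smul, one_smul]⟩

end LeftInverse

section Braid

variable {G : Type*} [Monoid G] (s : ℕ → G)

/-- The product `s j * s (j + 1) * ⋯ * s (m - 1)`, equal to `1` when `m ≤ j`. -/
def consecutiveProd (j : ℕ) : ℕ → G
  | 0 => 1
  | m + 1 => if j ≤ m then consecutiveProd j m * s m else 1

theorem consecutiveProd_of_le {j m : ℕ} (h : m ≤ j) : consecutiveProd s j m = 1 := by
  cases m with
  | zero => rfl
  | succ m => exact if_neg (by omega)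

theorem consecutiveProd_succ {j m : ℕ} (h : j ≤ m) :
    consecutiveProd s j (m + 1) = consecutiveProd s j m * s m :=
  if_pos h

theorem consecutiveProd_eq_mul {j m : ℕ} (h : j < m) :
    consecutiveProd s j m = s j * consecutiveProd s (j + 1) m := by
  induction m with
  | zero => omega
  | succ m ih =>
    rw [consecutiveProd_succ s (by omega)]
    rcases (Nat.lt_succ_iff_lt_or_eq.mp h) with hlt | rfl
    · rw [ih hlt, consecutiveProd_succ s (by omega), mul_assoc]
    · simp [consecutiveProd_of_le]

/-- The relations of the standard generators `s 0, …, s (N - 1)` of a symmetric group. -/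
structure IsCoxeterGenerators (N : ℕ) : Prop where
  sq : ∀ i < N, s i * s i = 1
  comm : ∀ i j, i + 1 < j → j < N → s j * s i = s i * s j
  braid : ∀ i, i + 1 < N → s (i + 1) * s i * s (i + 1) = s i * s (i + 1) * s i

variable {s} {N : ℕ}

theorem IsCoxeterGenerators.commute_consecutiveProd (hs : IsCoxeterGenerators s N)
    (k : ℕ) {m i : ℕ} (hm : m < i) (hi : i < N) :
    s i * consecutiveProd s k m = consecutiveProd s k m * s i := by
  induction m with
  | zero => simp [consecutiveProd]
  | succ m ih =>
    by_cases hk : k ≤ m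
    · rw [consecutiveProd_succ s hk, ← mul_assoc, ih (by omega), mul_assoc,
        hs.comm m i hm hi, mul_assoc]
    · rw [consecutiveProd_of_le s (by omega), mul_one, one_mul]

theorem IsCoxeterGenerators.consecutiveProd_mul (hs : IsCoxeterGenerators s N)
    {j k m : ℕ} (hj : j ≤ k) (hk : k ≤ m) (hm : m < N) :
    consecutiveProd s j (m + 1) * consecutiveProd s k (m + 1) =
      consecutiveProd s (k + 1) (m + 1) * consecutiveProd s j m := by
  induction m with
  | zero =>
    obtain rfl : k = 0 := by omega
    obtain rfl : j = 0 := by omega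
    simp [consecutiveProd, hs.sq 0 hm]
  | succ m ih =>
    rcases Nat.le_succ_iff.mp hk with hkm | rfl
    · have h1 : consecutiveProd s j (m + 1 + 1) * consecutiveProd s k (m + 1 + 1) =
          consecutiveProd s j (m + 1) * (s (m + 1) * consecutiveProd s k m) *
            s m * s (m + 1) := by
        rw [consecutiveProd_succ s (by omega : j ≤ m + 1),
          consecutiveProd_succ s (by omega : k ≤ m + 1), consecutiveProd_succ s hkm]
        simp only [mul_assoc]
      have h2 : consecutiveProd s j (m + 1) * (consecutiveProd s k m * s (m + 1)) *
            s m * s (m + 1) =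
          (consecutiveProd s j (m + 1) * consecutiveProd s k (m + 1)) * s (m + 1) * s m := by
        have hb := hs.braid m hm
        rw [consecutiveProd_succ s hkm]
        simp only [mul_assoc] at hb ⊢
        rw [hb]
      have h3 := hs.commute_consecutiveProd j (Nat.lt_succ_self m) hm
      rw [h1, hs.commute_consecutiveProd k (Nat.lt_succ_self m) hm, h2, ih hkm (by omega),
        consecutiveProd_succ s (by omega : k + 1 ≤ m + 1),
        consecutiveProd_succ s (by omega : j ≤ m), mul_assoc (consecutiveProd s (k + 1) (m + 1)),
        ← h3]
      simp only [mul_assoc]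
    · rw [consecutiveProd_of_le s (le_refl (m + 1 + 1)),
        consecutiveProd_succ s (le_refl (m + 1)), consecutiveProd_of_le s (le_refl (m + 1)),
        consecutiveProd_succ s hj, one_mul, one_mul, mul_assoc, hs.sq _ hm, mul_one]

theorem IsCoxeterGenerators.consecutiveProd_pow_mul (hs : IsCoxeterGenerators s N)
    {j m r : ℕ} (hr : j + r ≤ m + 1) (hm : m < N) :
    consecutiveProd s j (m + 1) ^ (r + 1) =
      consecutiveProd s (j + r) (m + 1) * consecutiveProd s j m ^ r := by
  induction r with
  | zero => simp
  | succ r ih =>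
    rw [pow_succ', ih (by omega), ← mul_assoc,
      hs.consecutiveProd_mul (by omega) (by omega) hm, mul_assoc, ← pow_succ']
    rfl

theorem IsCoxeterGenerators.consecutiveProd_pow (hs : IsCoxeterGenerators s N)
    {j m : ℕ} (hm : m ≤ N) : consecutiveProd s j m ^ (m + 1 - j) = 1 := by
  induction m with
  | zero => simp [consecutiveProd]
  | succ m ih =>
    by_cases hj : j ≤ m
    · have h := hs.consecutiveProd_pow_mul (r := m + 1 - j)
        (by omega : j + (m + 1 - j) ≤ m + 1) hm
      rw [ih (by omega), mul_one,
        consecutiveProd_of_le s (by omega : m + 1 ≤ j + (m + 1 - j))] at h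
      rwa [show m + 1 + 1 - j = m + 1 - j + 1 by omega]
    · rw [consecutiveProd_of_le s (by omega), one_pow]

end Braid

section CosetSum

variable {K R G : Type*} [CommRing K] [Ring R] [Algebra K R] [Monoid G]
  (q : K) (u : G →* R) (s : ℕ → G)

/-- The sum of `q ^ (m - k) • s k ⋯ s (m - 1)` over `j ≤ k ≤ m`. For `j = 0` it runs over the
minimal length representatives of the cosets of one symmetric group in the next. -/
def cosetSum (j m : ℕ) : R :=
  ∑ k ∈ Ico j (m + 1), q ^ (m - k) • u (consecutiveProd s k m)

theorem cosetSum_self (m : ℕ) : cosetSum q u s m m = 1 := by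
  simp [cosetSum, consecutiveProd_of_le]

variable {s} {N : ℕ}

theorem IsCoxeterGenerators.mul_cosetSum (hs : IsCoxeterGenerators s N)
    {j m : ℕ} (hj : j ≤ m) (hm : m < N) :
    (1 - q ^ (m + 1 - j) • u (consecutiveProd s j (m + 1))) * cosetSum q u s j (m + 1) =
      cosetSum q u s (j + 1) (m + 1) *
        (1 - q ^ (m + 2 - j) • u (consecutiveProd s j m)) := by
  have hfirst : cosetSum q u s j (m + 1) =
      q ^ (m + 1 - j) • u (consecutiveProd s j (m + 1)) + cosetSum q u s (j + 1) (m + 1) :=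
    sum_eq_sum_Ico_succ_bot (by omega) _
  have hmul : u (consecutiveProd s j (m + 1)) * cosetSum q u s j (m + 1) =
      q • (cosetSum q u s (j + 1) (m + 1) * u (consecutiveProd s j m)) +
        u (consecutiveProd s j (m + 1)) := by
    rw [cosetSum, sum_Ico_succ_top (by omega), mul_add, cosetSum, ← sum_Ico_add' _ j (m + 1) 1,
      mul_sum, sum_mul, smul_sum]
    congr 1
    · refine sum_congr rfl fun k hk => ?_
      rw [mem_Ico] at hk
      rw [mul_smul_comm, ← map_mul, hs.consecutiveProd_mul hk.1 (by omega) hm, map_mul,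
        smul_mul_assoc, smul_smul, ← pow_succ', show m + 1 - (k + 1) + 1 = m + 1 - k by omega]
    · simp [consecutiveProd_of_le]
  rw [sub_mul, one_mul, smul_mul_assoc, hmul, mul_sub, mul_one, mul_smul_comm, hfirst, smul_add,
    smul_smul, ← pow_succ, show m + 1 - j + 1 = m + 2 - j by omega]
  abel

theorem IsCoxeterGenerators.hasLeftInverseUpTo_cosetSum (hs : IsCoxeterGenerators s N)
    {j m : ℕ} (hj : j ≤ m) (hm : m ≤ N) :
    HasLeftInverseUpTo (∏ i ∈ Icc 1 (m - j), (1 - q ^ (i ^ 2 + i))) (cosetSum q u s j m) := by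
  obtain ⟨d, rfl⟩ := Nat.exists_eq_add_of_le hj
  rw [Nat.add_sub_cancel_left]
  induction d generalizing j with
  | zero => simpa [cosetSum_self] using hasLeftInverseUpTo_one
  | succ d ih =>
    have ih' := ih (j := j + 1) (by omega) (by omega)
    rw [show j + 1 + d = j + d + 1 by omega] at ih'
    have ht : u (consecutiveProd s j (j + d)) ^ (d + 1) = 1 := by
      rw [← map_pow, show d + 1 = j + d + 1 - j by omega,
        hs.consecutiveProd_pow (by omega), map_one]
    have h := ih'.mul (hasLeftInverseUpTo_one_sub_smul ht (q ^ (d + 2)))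
    have hmul := hs.mul_cosetSum q u (j := j) (m := j + d) (by omega) (by omega)
    rw [show j + d + 2 - j = d + 2 by omega] at hmul
    rw [← hmul] at h
    rw [prod_Icc_succ_top (by omega), show (d + 1) ^ 2 + (d + 1) = (d + 2) * (d + 1) by ring,
      pow_mul]
    exact h.of_mul_left

end CosetSum

theorem swap_braid {α : Type*} [DecidableEq α] {x y z : α} (hxy : x ≠ y) (hxz : x ≠ z)
    (hyz : y ≠ z) : swap y z * swap x y * swap y z = swap x y * swap y z * swap x y := by
  rw [swap_mul_swap_mul_swap hxy hxz, swap_comm x y, swap_comm y z,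
    swap_mul_swap_mul_swap hyz.symm hxz.symm, swap_comm]

section Permutations

variable {n : ℕ}

/-- The inversions of a permutation of `Fin n`. -/
def inversions (π : Perm (Fin n)) : Finset (Fin n × Fin n) :=
  univ.filter fun p => p.1 < p.2 ∧ π p.2 < π p.1

theorem mem_inversions {π : Perm (Fin n)} {p : Fin n × Fin n} :
    p ∈ inversions π ↔ p.1 < p.2 ∧ π p.2 < π p.1 := by
  simp [inversions]

theorem card_inversions_swap_mul {i j : Fin n} (hij : (j : ℕ) = i + 1) {π : Perm (Fin n)}
    (h : π⁻¹ i < π⁻¹ j) : #(inversions (swap i j * π)) = #(inversions π) + 1 := by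
  have hne : i ≠ j := fun h => by simp [h] at hij
  have hnot : (π⁻¹ i, π⁻¹ j) ∉ inversions π := by
    simp only [mem_inversions, Perm.coe_inv, apply_symm_apply, Fin.lt_def]
    omega
  rw [← card_insert_of_notMem hnot]
  congr 1
  ext ⟨a, b⟩
  obtain ⟨x, rfl⟩ := π⁻¹.surjective a
  obtain ⟨y, rfl⟩ := π⁻¹.surjective b
  simp only [mem_insert, mem_inversions, Prod.mk.injEq,
    EmbeddingLike.apply_eq_iff_eq, Perm.mul_apply, Perm.coe_inv, apply_symm_apply] at h ⊢
  rw [swap_apply_def, swap_apply_def]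
  grind

/-- The transposition of `i` and `i + 1` in `Fin n`, trivial when `i + 1` is out of range. -/
def adjSwap (n i : ℕ) : Perm (Fin n) :=
  if h : i + 1 < n then swap ⟨i, by omega⟩ ⟨i + 1, h⟩ else 1

theorem adjSwap_of_lt {i : ℕ} (h : i + 1 < n) :
    adjSwap n i = swap ⟨i, by omega⟩ ⟨i + 1, h⟩ :=
  dif_pos h

theorem isCoxeterGenerators_adjSwap (n : ℕ) : IsCoxeterGenerators (adjSwap n) (n - 1) where
  sq i hi := by rw [adjSwap_of_lt (by omega), swap_mul_self]
  comm i j hij hj := by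
    rw [adjSwap_of_lt (by omega), adjSwap_of_lt (by omega)]
    refine (Perm.disjoint_swap_swap ?_).commute.eq
    simp
    omega
  braid i hi := by
    rw [adjSwap_of_lt (by omega), adjSwap_of_lt (by omega)]
    exact swap_braid (by simp) (by simp [add_assoc]) (by simp)

theorem consecutiveProd_adjSwap_apply_of_gt {k m : ℕ} {x : Fin n} (hx : m < x) :
    consecutiveProd (adjSwap n) k m x = x := by
  induction m with
  | zero => rfl
  | succ m ih =>
    by_cases hk : k ≤ m
    · rw [consecutiveProd_succ _ hk, Perm.mul_apply, adjSwap_of_lt (by omega),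
        swap_apply_of_ne_of_ne (by simp [Fin.ext_iff]; omega) (by simp [Fin.ext_iff]; omega),
        ih (by omega)]
    · rw [consecutiveProd_of_le _ (by omega), Perm.one_apply]

theorem consecutiveProd_adjSwap_apply_of_lt {k m : ℕ} {x : Fin n} (hm : m < n) (hx : x < k) :
    consecutiveProd (adjSwap n) k m x = x := by
  induction m with
  | zero => rfl
  | succ m ih =>
    by_cases hk : k ≤ m
    · rw [consecutiveProd_succ _ hk, Perm.mul_apply, adjSwap_of_lt (by omega),
        swap_apply_of_ne_of_ne (by simp [Fin.ext_iff]; omega) (by simp [Fin.ext_iff]; omega),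
        ih (by omega)]
    · rw [consecutiveProd_of_le _ (by omega), Perm.one_apply]

theorem consecutiveProd_adjSwap_apply_top {k m : ℕ} (hk : k ≤ m) (hm : m < n) :
    consecutiveProd (adjSwap n) k m ⟨m, hm⟩ = ⟨k, by omega⟩ := by
  induction m with
  | zero => simp [consecutiveProd, Nat.le_zero.mp hk]
  | succ m ih =>
    rcases Nat.le_succ_iff.mp hk with hkm | rfl
    · rw [consecutiveProd_succ _ hkm, Perm.mul_apply, adjSwap_of_lt hm, swap_apply_right, ih hkm]
    · rw [consecutiveProd_of_le _ le_rfl, Perm.one_apply]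

/-- The permutations of `Fin n` fixing every index that is at least `m`. -/
def permsFixingFrom (n m : ℕ) : Finset (Perm (Fin n)) :=
  univ.filter fun π => ∀ i : Fin n, m ≤ i → π i = i

theorem mem_permsFixingFrom {m : ℕ} {π : Perm (Fin n)} :
    π ∈ permsFixingFrom n m ↔ ∀ i : Fin n, m ≤ i → π i = i := by
  simp [permsFixingFrom]

theorem card_inversions_consecutiveProd_mul {k m : ℕ} (hk : k ≤ m) (hm : m < n)
    {ρ : Perm (Fin n)} (hρ : ρ ∈ permsFixingFrom n m) :
    #(inversions (consecutiveProd (adjSwap n) k m * ρ)) = m - k + #(inversions ρ) := by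
  rw [mem_permsFixingFrom] at hρ
  induction hk using Nat.decreasingInduction with
  | self => simp [consecutiveProd_of_le]
  | of_succ k hk ih =>
    rw [consecutiveProd_eq_mul _ hk, mul_assoc, adjSwap_of_lt (by omega),
      card_inversions_swap_mul rfl, ih]
    · omega
    · have htop : (consecutiveProd (adjSwap n) (k + 1) m * ρ)⁻¹ ⟨k + 1, by omega⟩ = ⟨m, hm⟩ := by
        rw [Perm.inv_eq_iff_eq, Perm.mul_apply, hρ _ le_rfl,
          consecutiveProd_adjSwap_apply_top hk hm]
      have hbot : (consecutiveProd (adjSwap n) (k + 1) m)⁻¹ ⟨k, by omega⟩ = ⟨k, by omega⟩ := by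
        rw [Perm.inv_eq_iff_eq, consecutiveProd_adjSwap_apply_of_lt hm (by simp)]
      rw [htop, mul_inv_rev, Perm.mul_apply, hbot, Fin.lt_def]
      by_contra! hle
      have h : (⟨k, by omega⟩ : Fin n) = ρ⁻¹ ⟨k, by omega⟩ :=
        (ρ.apply_symm_apply _).symm.trans (hρ _ hle)
      rw [← h] at hle
      simp at hle
      omega

variable {K R : Type*} [CommRing K] [Ring R] [Algebra K R] (q : K) (u : Perm (Fin n) →* R)

theorem sum_permsFixingFrom_succ {m : ℕ} (hm : m < n) :
    ∑ π ∈ permsFixingFrom n (m + 1), q ^ #(inversions π) • u π =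
      cosetSum q u (adjSwap n) 0 m * ∑ π ∈ permsFixingFrom n m, q ^ #(inversions π) • u π := by
  have hmaps : ∀ π ∈ permsFixingFrom n (m + 1), (π ⟨m, hm⟩ : ℕ) ∈ Ico 0 (m + 1) := by
    intro π hπ
    rw [mem_permsFixingFrom] at hπ
    by_contra! hle
    simp only [mem_Ico, zero_le, true_and, not_lt] at hle
    have h := congrArg Fin.val (π.injective (hπ _ hle))
    simp only at h
    omega
  rw [← sum_fiberwise_of_maps_to hmaps, cosetSum, sum_mul]
  refine sum_congr rfl fun k hk => ?_
  replace hk : k ≤ m := by simpa [Nat.lt_succ_iff] using hk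
  set t := consecutiveProd (adjSwap n) k m
  have htop : t ⟨m, hm⟩ = ⟨k, by omega⟩ := consecutiveProd_adjSwap_apply_top hk hm
  have hgt (x : Fin n) (hx : m < x) : t x = x := consecutiveProd_adjSwap_apply_of_gt hx
  rw [mul_sum]
  refine (sum_nbij' (fun ρ => t * ρ) (fun π => t⁻¹ * π) ?_ ?_ ?_ ?_ ?_).symm
  · intro ρ hρ
    rw [mem_permsFixingFrom] at hρ
    rw [mem_filter, mem_permsFixingFrom]
    refine ⟨fun i hi => ?_, ?_⟩
    · rw [Perm.mul_apply, hρ i (by omega), hgt i hi]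
    · rw [Perm.mul_apply, hρ _ le_rfl, htop]
  · intro π hπ
    rw [mem_filter, mem_permsFixingFrom] at hπ
    rw [mem_permsFixingFrom]
    intro i hi
    rw [Perm.mul_apply, Perm.inv_eq_iff_eq]
    rcases hi.eq_or_lt with heq | hlt
    · obtain rfl : i = ⟨m, hm⟩ := Fin.ext heq.symm
      rw [htop]
      exact Fin.ext hπ.2
    · rw [hπ.1 i hlt, hgt i hlt]
  · intro ρ _
    simp
  · intro π _
    simp
  · intro ρ hρ
    rw [card_inversions_consecutiveProd_mul hk hm hρ, smul_mul_smul_comm, map_mul, pow_add]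

theorem hasLeftInverseUpTo_sum_permsFixingFrom {m : ℕ} (hm : m ≤ n) :
    HasLeftInverseUpTo (∏ j ∈ range m, ∏ i ∈ Icc 1 j, (1 - q ^ (i ^ 2 + i)))
      (∑ π ∈ permsFixingFrom n m, q ^ #(inversions π) • u π) := by
  induction m with
  | zero =>
    have hone : permsFixingFrom n 0 = {1} := by
      ext π
      simp [mem_permsFixingFrom, Perm.ext_iff]
    have hinv : inversions (1 : Perm (Fin n)) = ∅ := by
      ext p
      simpa [mem_inversions] using le_of_lt
    simpa [hone, hinv] using hasLeftInverseUpTo_one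
  | succ m ih =>
    rw [sum_permsFixingFrom_succ q u hm, prod_range_succ, mul_comm]
    exact ((isCoxeterGenerators_adjSwap n).hasLeftInverseUpTo_cosetSum q u (Nat.zero_le m)
      (by omega)).mul (ih (by omega))

theorem hasLeftInverseUpTo_sum_perm :
    HasLeftInverseUpTo (∏ j ∈ range n, ∏ i ∈ Icc 1 j, (1 - q ^ (i ^ 2 + i)))
      (∑ π : Perm (Fin n), q ^ #(inversions π) • u π) := by
  have huniv : permsFixingFrom n n = univ := by
    ext π
    simp only [mem_permsFixingFrom, mem_univ, iff_true]
    omega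
  simpa only [huniv] using hasLeftInverseUpTo_sum_permsFixingFrom q u le_rfl

end Permutations

theorem prod_range_prod_Icc {K : Type*} [CommMonoid K] (f : ℕ → K) (n : ℕ) :
    ∏ j ∈ range n, ∏ i ∈ Icc 1 j, f i = ∏ i ∈ Icc 1 (n - 1), f i ^ (n - i) := by
  rw [prod_comm' (t' := Icc 1 (n - 1)) (s' := fun i => Ico i n)]
  · simp
  · intro j i
    simp only [mem_range, mem_Icc, mem_Ico]
    omega

/-- The representation of a finite group on its regular matrices, `g` being sent to the matrix
with entry `1` at the `(a, b)` such that `b⁻¹ * a = g`. It reverses products. -/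
def regularMatrix (K G : Type*) [CommRing K] [Group G] [Fintype G] [DecidableEq G] :
    G →* (Matrix G G K)ᵐᵒᵖ where
  toFun g := MulOpposite.op (Matrix.of fun a b => if b⁻¹ * a = g then 1 else 0)
  map_one' := by
    rw [← MulOpposite.op_one]
    congr 1
    ext a b
    simp [Matrix.one_apply, inv_mul_eq_one, eq_comm]
  map_mul' g h := by
    rw [← MulOpposite.op_mul]
    congr 1
    ext a b
    simp only [Matrix.mul_apply, Matrix.of_apply, mul_ite, mul_one, mul_zero]
    rw [sum_eq_single (b * g)]
    · simp [inv_mul_eq_iff_eq_mul, mul_assoc]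
    · intro c _ hc
      rw [if_neg (by rwa [inv_mul_eq_iff_eq_mul])]
    · simp

theorem Matrix.mul_eq_smul_one_comm {K ι : Type*} [CommRing K] [IsDomain K] [Fintype ι]
    [DecidableEq ι] {A B : Matrix ι ι K} {d : K} (hd : d ≠ 0) (h : A * B = d • 1) :
    B * A = d • 1 := by
  have hdet : A.det ≠ 0 := by
    intro h0
    have := congrArg Matrix.det h
    rw [Matrix.det_mul, h0, zero_mul, Matrix.det_smul, Matrix.det_one, mul_one] at this
    exact pow_ne_zero _ hd this.symm
  have hA : A * (B * A) = A * (d • 1) := by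
    rw [← mul_assoc, h, smul_mul_assoc, one_mul, mul_smul_comm, mul_one]
  have := congrArg (A.adjugate * ·) hA
  simp only [← mul_assoc, Matrix.adjugate_mul, smul_mul_assoc, one_mul] at this
  exact smul_right_injective _ hdet this


/-- The number of inversions `ι(σ,τ) = #{(i,j) : i < j and τ⁻¹(σ(i)) > τ⁻¹(σ(j))}`. -/
def inv_count {n : ℕ} (σ τ : Equiv.Perm (Fin n)) : ℕ :=
  (Finset.univ.filter
      (fun p : Fin n × Fin n => p.1 < p.2 ∧ τ⁻¹ (σ p.2) < τ⁻¹ (σ p.1))).card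

/-- Extended Zagier conjecture: the inverse of the matrix `(q^{ι(σ,τ)})_{σ,τ}`
has entries with denominator dividing `∏_{i=1}^{n−1} (1 − q^{i²+i})^{n−i}`. -/
theorem extended_zagier (n : ℕ) (hn : 2 ≤ n) :
    ∃ N : Matrix (Equiv.Perm (Fin n)) (Equiv.Perm (Fin n)) (Polynomial ℤ),
      (Matrix.of fun σ τ : Equiv.Perm (Fin n) =>
          (Polynomial.X : Polynomial ℤ) ^ inv_count σ τ) * N =
        (∏ i ∈ Finset.Icc 1 (n - 1),
            (1 - (Polynomial.X : Polynomial ℤ) ^ (i ^ 2 + i)) ^ (n - i)) •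
          (1 : Matrix (Equiv.Perm (Fin n)) (Equiv.Perm (Fin n)) (Polynomial ℤ)) ∧
      N * (Matrix.of fun σ τ : Equiv.Perm (Fin n) =>
          (Polynomial.X : Polynomial ℤ) ^ inv_count σ τ) =
        (∏ i ∈ Finset.Icc 1 (n - 1),
            (1 - (Polynomial.X : Polynomial ℤ) ^ (i ^ 2 + i)) ^ (n - i)) •
          (1 : Matrix (Equiv.Perm (Fin n)) (Equiv.Perm (Fin n)) (Polynomial ℤ)) := by
  set M := Matrix.of fun σ τ : Equiv.Perm (Fin n) =>
    (Polynomial.X : Polynomial ℤ) ^ inv_count σ τ with hM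
  have hsum : ∑ π : Perm (Fin n), (Polynomial.X : Polynomial ℤ) ^ #(inversions π) •
      regularMatrix (Polynomial ℤ) (Perm (Fin n)) π = MulOpposite.op M := by
    apply MulOpposite.unop_injective
    ext1 σ τ
    rw [Finset.unop_sum, Matrix.sum_apply]
    have hinv : #(inversions (τ⁻¹ * σ)) = inv_count σ τ := rfl
    simp [regularMatrix, hM, hinv]
  obtain ⟨y, hy⟩ := hasLeftInverseUpTo_sum_perm (n := n) (Polynomial.X : Polynomial ℤ)
    (regularMatrix (Polynomial ℤ) (Perm (Fin n)))
  rw [hsum, prod_range_prod_Icc (fun i => 1 - (Polynomial.X : Polynomial ℤ) ^ (i ^ 2 + i))] at hy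
  have hMN := congrArg MulOpposite.unop hy
  rw [MulOpposite.unop_mul, MulOpposite.unop_op, MulOpposite.unop_smul,
    MulOpposite.unop_one] at hMN
  refine ⟨y.unop, hMN, Matrix.mul_eq_smul_one_comm ?_ hMN⟩
  refine prod_ne_zero_iff.mpr fun i hi => pow_ne_zero _ fun h => ?_
  have hpos := (mem_Icc.mp hi).1
  have := congrArg (Polynomial.eval 0) h
  simp [show i ≠ 0 by omega] at this
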